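/- arXiv:2602.13090 — 5 statements merged into one kernel-verified Lean document; each statement's English description precedes it below -/
import Mathlib

section
/- Fix integers 0 ≤ c_min < c_max and a block-tuple M = (m_{c_min}, …, m_{c_max}). Let N(M) denote the number of valid tuples for M. If m_{c_max−1} = 1, then N(M) = 2·N(M'). If m_{c_max−1} ≥ 3 and c_max ≥ c_min + 2, then N(M) = 3·N(M') − N(M''). (This is the combinatorial form of the paper's recursion for the number of local Arthur packets containing a tempered block not starting at zero.) -/
/-- `M` is a block-tuple on `{cmin, …, cmax}`: each entry is a positive odd integer. -/
def IsBlockTuple (cmin cmax : ℕ) (M : ℕ → ℕ) : Prop :=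
  ∀ c ∈ Finset.Icc cmin cmax, 0 < M c ∧ Odd (M c)

/-- `S = (S_1, …, S_k)` is a valid tuple for the block-tuple `M` on `{cmin, …, cmax}`:
(1) each `S_i` is a nonempty set of consecutive integers;
(2) the union of the `S_i` is `{cmin, …, cmax}`;
(3) if `i < j`, `s ∈ S_i`, `t ∈ S_j` then `s ≤ t`;
(4) if `i < j` and `c ∈ S_i ∩ S_j` then `j = i + 1`, `|S_j| ≥ 2` and `m_c > 1`;
(5) if `i ≥ 2` (1-indexed), `|S_i| ≥ 2` and `c = min S_i` has `m_c > 1`, then `c ∈ S_{i-1}`. -/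
def IsValidTuple (cmin cmax : ℕ) (M : ℕ → ℕ) (S : List (Finset ℕ)) : Prop :=
  (∀ i : Fin S.length, ∃ a b : ℕ, a ≤ b ∧ S.get i = Finset.Icc a b) ∧
  (∀ c : ℕ, c ∈ Finset.Icc cmin cmax ↔ ∃ i : Fin S.length, c ∈ S.get i) ∧
  (∀ i j : Fin S.length, i < j → ∀ s ∈ S.get i, ∀ t ∈ S.get j, s ≤ t) ∧
  (∀ i j : Fin S.length, i < j → ∀ c : ℕ, c ∈ S.get i → c ∈ S.get j →
    (j : ℕ) = (i : ℕ) + 1 ∧ 2 ≤ (S.get j).card ∧ 1 < M c) ∧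
  (∀ i : Fin S.length, 1 ≤ (i : ℕ) → 2 ≤ (S.get i).card →
    ∀ c : ℕ, c ∈ S.get i → (∀ x ∈ S.get i, c ≤ x) → 1 < M c →
    ∃ j : Fin S.length, (j : ℕ) + 1 = (i : ℕ) ∧ c ∈ S.get j)

/-- `N(M)`: the number of valid tuples for the block-tuple `M` on `{cmin, …, cmax}`. -/
noncomputable def numValid (cmin cmax : ℕ) (M : ℕ → ℕ) : ℕ :=
  {S : List (Finset ℕ) | IsValidTuple cmin cmax M S}.ncard

/-!
Consecutive sets of a valid tuple are intervals `[e, b]`, `[a, d]` with `a = b` if `a < d` and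
`1 < m_a`, and `a = b + 1` otherwise. Let `N n` count the valid tuples on `{cmin, …, n}`, and let
`p a n` count those whose last set is `[a, n]`. Then `p a n` depends on `n` only through the truth
of `a < n ∧ 1 < m_a`, and `p (n + 1) (n + 1) = N n`. Comparing `N n = ∑ a ≤ n, p a n` with
`N (n + 1)` term by term gives `N (n + 1) + p n n = 2 * N n + p n (n + 1)`. If `m_n ≤ 1` then
`p n (n + 1) = p n n`; if `1 < m_n` and `cmin < n` then `p n (n + 1) = N n` and `p n n = N (n - 1)`.
-/

open Finset

/-- `B` may directly follow `A` in a valid tuple for `M`: conditions (4) and (5), restricted to a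
pair of neighbours. -/
def IsLinked (M : ℕ → ℕ) (A B : Finset ℕ) : Prop :=
  (∀ c ∈ A, c ∈ B → 2 ≤ #B ∧ 1 < M c) ∧
  (2 ≤ #B → ∀ c ∈ B, (∀ x ∈ B, c ≤ x) → 1 < M c → c ∈ A)

section ValidTuples

variable {cmin n a b e : ℕ} {M : ℕ → ℕ} {S L K : List (Finset ℕ)}

theorem IsLinked.false_of_between {A B C : Finset ℕ} {c : ℕ} (hlink : IsLinked M A C)
    (hC : C.Nonempty) (hAC : ∀ s ∈ A, ∀ t ∈ C, s ≤ t) (hCB : ∀ s ∈ C, ∀ t ∈ B, s ≤ t)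
    (hcA : c ∈ A) (hcB : c ∈ B) : False := by
  have hCeq : C = {c} :=
    eq_singleton_iff_nonempty_unique_mem.2
      ⟨hC, fun x hx => le_antisymm (hCB x hx c hcB) (hAC c hcA x hx)⟩
  have hcard := (hlink.1 c hcA (by simp [hCeq])).1
  simp [hCeq] at hcard

theorem isValidTuple_iff :
    IsValidTuple cmin n M S ↔
      (∀ A ∈ S, ∃ a b, a ≤ b ∧ A = Icc a b) ∧
      (∀ c, c ∈ Icc cmin n ↔ ∃ A ∈ S, c ∈ A) ∧
      S.Pairwise (fun A B => ∀ s ∈ A, ∀ t ∈ B, s ≤ t) ∧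
      S.IsChain (IsLinked M) := by
  simp only [IsValidTuple, List.forall_mem_iff_getElem, List.exists_mem_iff_getElem,
    List.pairwise_iff_getElem, List.isChain_iff_getElem, Fin.forall_iff, Fin.exists_iff,
    List.get_eq_getElem, Fin.lt_def]
  constructor
  · rintro ⟨hIcc, hcover, hmono, hoverlap, hmin⟩
    refine ⟨hIcc, hcover, fun i j hi hj hij => hmono i hi j hj hij, fun i hi => ⟨?_, ?_⟩⟩
    · exact fun c hc hc' => (hoverlap i (by omega) (i + 1) hi (by omega) c hc hc').2
    · intro hcard c hc hle hM
      obtain ⟨j, hj, hji, hcj⟩ := hmin (i + 1) hi (by omega) hcard c hc hle hM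
      obtain rfl : j = i := by omega
      exact hcj
  · rintro ⟨hIcc, hcover, hmono, hchain⟩
    refine ⟨hIcc, hcover, fun i hi j hj hij => hmono i j hi hj hij, ?_, ?_⟩
    · intro i hi j hj hij c hci hcj
      rcases (Nat.succ_le_of_lt hij).eq_or_lt with rfl | hlt
      · exact ⟨rfl, (hchain i hj).1 c hci hcj⟩
      · obtain ⟨a, b, hab, hmid⟩ := hIcc (i + 1) (by omega)
        exact ((hchain i (by omega)).false_of_between (hmid ▸ nonempty_Icc.2 hab)
          (hmono i (i + 1) hi _ (by omega)) (hmono (i + 1) j _ hj hlt) hci hcj).elim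
    · intro i hi hpos hcard c hc hle hM
      obtain ⟨j, rfl⟩ := Nat.exists_eq_add_of_le' hpos
      exact ⟨j, by omega, rfl, (hchain j hi).2 hcard c hc hle hM⟩

theorem isLinked_Icc_iff (heb : e ≤ b) (hba : b ≤ a) (han : a ≤ n) :
    IsLinked M (Icc e b) (Icc a n) ↔ (a = b ↔ a < n ∧ 1 < M a) := by
  simp only [IsLinked, Nat.card_Icc, mem_Icc]
  constructor
  · rintro ⟨hoverlap, hmin⟩
    constructor
    · rintro rfl
      have := hoverlap a ⟨heb, le_rfl⟩ ⟨le_rfl, han⟩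
      omega
    · rintro ⟨hlt, hM⟩
      have := hmin (by omega) a ⟨le_rfl, han⟩ (fun x hx => hx.1) hM
      omega
  · intro h
    constructor
    · intro c hcA hcB
      obtain rfl : c = a := by omega
      have := h.1 (by omega)
      omega
    · intro hcard c hc hle hM
      obtain rfl : c = a := le_antisymm (hle a ⟨le_rfl, han⟩) hc.1
      have := h.2 (by omega)
      omega

theorem isValidTuple_singleton_Icc_iff (han : a ≤ n) (hn : cmin ≤ n) :
    IsValidTuple cmin n M [Icc a n] ↔ a = cmin := by
  simp only [isValidTuple_iff, List.mem_singleton, forall_eq, exists_eq_left,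
    List.pairwise_singleton, List.isChain_singleton, and_true]
  constructor
  · rintro ⟨-, hcover⟩
    have ha := (hcover a).2 (left_mem_Icc.2 han)
    have hcmin := (hcover cmin).1 (left_mem_Icc.2 hn)
    exact le_antisymm (mem_Icc.1 hcmin).1 (mem_Icc.1 ha).1
  · rintro rfl
    exact ⟨⟨a, n, han, rfl⟩, fun c => Iff.rfl⟩

theorem IsValidTuple.exists_eq_append_Icc (hS : IsValidTuple cmin n M S) (hn : cmin ≤ n) :
    ∃ L, ∃ a ∈ Icc cmin n, S = L ++ [Icc a n] := by
  obtain ⟨hIcc, hcover, hmono, -⟩ := isValidTuple_iff.1 hS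
  obtain ⟨A, hA, hnA⟩ := (hcover n).1 (right_mem_Icc.2 hn)
  obtain rfl | ⟨L, T, rfl⟩ := S.eq_nil_or_concat'
  · simp at hA
  obtain ⟨a, d, had, rfl⟩ := hIcc T (by simp)
  have ha := (hcover a).2 ⟨Icc a d, by simp, left_mem_Icc.2 had⟩
  have hd := (hcover d).2 ⟨Icc a d, by simp, right_mem_Icc.2 had⟩
  have hnd : n ≤ d := by
    obtain hAL | rfl : A ∈ L ∨ A = Icc a d := by simpa using hA
    · exact ((List.pairwise_append.1 hmono).2.2 A hAL _ (by simp) n hnA a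
        (left_mem_Icc.2 had)).trans had
    · exact (mem_Icc.1 hnA).2
  obtain rfl : d = n := le_antisymm (mem_Icc.1 hd).2 hnd
  exact ⟨L, a, ha, rfl⟩

theorem covers_append_Icc_iff (hb : ∃ A ∈ L, b ∈ A) (hLb : ∀ A ∈ L, ∀ s ∈ A, s ≤ b)
    (hba : b ≤ a) (han : a ≤ n) :
    (∀ c, c ∈ Icc cmin n ↔ ∃ A ∈ L ++ [Icc a n], c ∈ A) ↔
      (∀ c, c ∈ Icc cmin b ↔ ∃ A ∈ L, c ∈ A) ∧ a ≤ b + 1 := by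
  have hle (c : ℕ) : (∃ A ∈ L, c ∈ A) → c ≤ b := fun ⟨A, hA, hc⟩ => hLb A hA c hc
  simp only [List.mem_append, List.mem_singleton, or_and_right, exists_or, exists_eq_left, mem_Icc]
  constructor
  · intro hcover
    have hcmin_le : cmin ≤ b := ((hcover b).2 (.inl hb)).1
    refine ⟨fun c => ⟨fun hc => ?_, fun hc => ⟨((hcover c).2 (.inl hc)).1, hle c hc⟩⟩, ?_⟩
    · rcases (hcover c).1 (by omega) with hcL | hca
      · exact hcL
      · obtain rfl : c = b := by omega
        exact hb
    · by_contra! hgap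
      rcases (hcover (b + 1)).1 (by omega) with hmemL | hmemIcc
      · exact (hle _ hmemL).not_gt b.lt_succ_self
      · omega
  · rintro ⟨hcover, hab⟩ c
    have hcmin_le := (hcover b).2 hb
    grind

theorem le_of_mem_of_pairwise_append_Icc (heb : e ≤ b)
    (h : (K ++ [Icc e b]).Pairwise (fun A B => ∀ s ∈ A, ∀ t ∈ B, s ≤ t)) :
    ∀ A ∈ K ++ [Icc e b], ∀ s ∈ A, s ≤ b := by
  simp only [List.forall_mem_append, List.forall_mem_singleton]
  exact ⟨fun A hA s hs => (List.pairwise_append.1 h).2.2 A hA _ (by simp) s hs b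
    (right_mem_Icc.2 heb), fun s hs => (mem_Icc.1 hs).2⟩

theorem pairwise_append_Icc_append_Icc_iff (heb : e ≤ b) (han : a ≤ n) :
    (K ++ [Icc e b] ++ [Icc a n]).Pairwise (fun A B => ∀ s ∈ A, ∀ t ∈ B, s ≤ t) ↔
      (K ++ [Icc e b]).Pairwise (fun A B => ∀ s ∈ A, ∀ t ∈ B, s ≤ t) ∧ b ≤ a := by
  simp only [List.pairwise_append (l₁ := K ++ [Icc e b]), List.pairwise_singleton, true_and,
    List.mem_singleton, forall_eq]
  refine and_congr_right fun hmono => ⟨fun h => ?_, fun hba A hA s hs t ht => ?_⟩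
  · exact h (Icc e b) (by simp) b (right_mem_Icc.2 heb) a (left_mem_Icc.2 han)
  · exact (le_of_mem_of_pairwise_append_Icc heb hmono A hA s hs).trans
      (hba.trans (mem_Icc.1 ht).1)

theorem isValidTuple_append_Icc_append_Icc_iff (heb : e ≤ b) (han : a ≤ n) :
    IsValidTuple cmin n M (K ++ [Icc e b] ++ [Icc a n]) ↔
      IsValidTuple cmin b M (K ++ [Icc e b]) ∧ if a < n ∧ 1 < M a then a = b else a = b + 1 := by
  have hIcc_iff : (∀ A ∈ K ++ [Icc e b] ++ [Icc a n], ∃ a b, a ≤ b ∧ A = Icc a b) ↔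
      ∀ A ∈ K ++ [Icc e b], ∃ a b, a ≤ b ∧ A = Icc a b := by
    rw [List.forall_mem_append, List.forall_mem_singleton]
    exact and_iff_left ⟨a, n, han, rfl⟩
  have hchain_iff : (K ++ [Icc e b] ++ [Icc a n]).IsChain (IsLinked M) ↔
      (K ++ [Icc e b]).IsChain (IsLinked M) ∧ IsLinked M (Icc e b) (Icc a n) := by
    simp
  have hb : ∃ A ∈ K ++ [Icc e b], b ∈ A := ⟨Icc e b, by simp, right_mem_Icc.2 heb⟩
  simp only [isValidTuple_iff, hIcc_iff, hchain_iff, pairwise_append_Icc_append_Icc_iff heb han]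
  constructor
  · rintro ⟨hIcc, hcover, ⟨hmono, hba⟩, hchain, hlink⟩
    rw [isLinked_Icc_iff heb hba han] at hlink
    obtain ⟨hcover, hab⟩ := (covers_append_Icc_iff hb
      (le_of_mem_of_pairwise_append_Icc heb hmono) hba han).1 hcover
    refine ⟨⟨hIcc, hcover, hmono, hchain⟩, ?_⟩
    split_ifs with hoverlap
    · exact hlink.2 hoverlap
    · have := mt hlink.1 hoverlap
      omega
  · rintro ⟨⟨hIcc, hcover, hmono, hchain⟩, hab⟩
    have hba : b ≤ a ∧ a ≤ b + 1 := by split_ifs at hab <;> omega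
    refine ⟨hIcc, (covers_append_Icc_iff hb (le_of_mem_of_pairwise_append_Icc heb hmono) hba.1
      han).2 ⟨hcover, hba.2⟩, ⟨hmono, hba.1⟩, hchain, ?_⟩
    rw [isLinked_Icc_iff heb hba.1 han]
    split_ifs at hab with hoverlap
    · exact iff_of_true hab hoverlap
    · exact iff_of_false (by omega) hoverlap

theorem isValidTuple_append_Icc_iff (han : a ≤ n) (hn : cmin ≤ n) :
    IsValidTuple cmin n M (L ++ [Icc a n]) ↔
      (L = [] ∧ a = cmin) ∨
      ∃ b, cmin ≤ b ∧ IsValidTuple cmin b M L ∧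
        if a < n ∧ 1 < M a then a = b else a = b + 1 := by
  constructor
  · intro hS
    obtain rfl | ⟨K, U, rfl⟩ := L.eq_nil_or_concat'
    · exact .inl ⟨rfl, (isValidTuple_singleton_Icc_iff han hn).1 hS⟩
    · obtain ⟨e, b, heb, rfl⟩ := (isValidTuple_iff.1 hS).1 U (by simp)
      obtain ⟨hL, hab⟩ := (isValidTuple_append_Icc_append_Icc_iff heb han).1 hS
      have hb := ((isValidTuple_iff.1 hL).2.1 b).2 ⟨Icc e b, by simp, right_mem_Icc.2 heb⟩
      exact .inr ⟨b, (mem_Icc.1 hb).1, hL, hab⟩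
  · rintro (⟨rfl, rfl⟩ | ⟨b, hb, hL, hab⟩)
    · exact (isValidTuple_singleton_Icc_iff han hn).2 rfl
    · obtain ⟨K, e, he, rfl⟩ := hL.exists_eq_append_Icc hb
      exact (isValidTuple_append_Icc_append_Icc_iff (mem_Icc.1 he).2 han).2 ⟨hL, hab⟩

/-- The tuples that the final interval `[a, n]` completes to a valid tuple on
`{cmin, …, n}`. -/
def validPrefixes (cmin : ℕ) (M : ℕ → ℕ) (a n : ℕ) : Set (List (Finset ℕ)) :=
  {L | IsValidTuple cmin n M (L ++ [Icc a n])}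

theorem validPrefixes_congr {m : ℕ} (hm : a ≤ m) (hn : a ≤ n) (ha : cmin ≤ a)
    (h : 1 < M a → (a < m ↔ a < n)) : validPrefixes cmin M a m = validPrefixes cmin M a n := by
  have hiff : a < m ∧ 1 < M a ↔ a < n ∧ 1 < M a := and_congr_left h
  ext L
  simp only [validPrefixes, Set.mem_ofPred_eq, isValidTuple_append_Icc_iff hm (ha.trans hm),
    isValidTuple_append_Icc_iff hn (ha.trans hn), hiff]

theorem validPrefixes_self_succ (hn : cmin < n) (hM : 1 < M n) :
    validPrefixes cmin M n (n + 1) = {S | IsValidTuple cmin n M S} := by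
  ext L
  simp [validPrefixes, isValidTuple_append_Icc_iff n.le_succ (hn.le.trans n.le_succ), hM, hn.ne',
    hn.le]

theorem validPrefixes_succ_self (hn : cmin ≤ n) :
    validPrefixes cmin M (n + 1) (n + 1) = {S | IsValidTuple cmin n M S} := by
  ext L
  have hne : n + 1 ≠ cmin := by omega
  simp only [validPrefixes, Set.mem_ofPred_eq,
    isValidTuple_append_Icc_iff le_rfl (hn.trans n.le_succ)]
  simp [hne, hn]

theorem setOf_isValidTuple_eq_biUnion (hn : cmin ≤ n) :
    {S | IsValidTuple cmin n M S} =
      ⋃ a ∈ (Icc cmin n : Set ℕ), (· ++ [Icc a n]) '' validPrefixes cmin M a n := by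
  ext S
  simp only [Set.mem_ofPred_eq, Set.mem_iUnion, Set.mem_image, exists_prop]
  constructor
  · intro hS
    obtain ⟨L, a, ha, rfl⟩ := hS.exists_eq_append_Icc hn
    exact ⟨a, ha, L, hS, rfl⟩
  · rintro ⟨a, -, L, hL, rfl⟩
    exact hL

theorem finite_setOf_isValidTuple (hn : cmin ≤ n) : {S | IsValidTuple cmin n M S}.Finite := by
  induction n using Nat.strong_induction_on with
  | _ n ih =>
    have hfinite : ({[]} ∪ ⋃ b ∈ Set.Ico cmin n, {S | IsValidTuple cmin b M S}).Finite :=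
      (Set.finite_singleton _).union
        ((Set.finite_Ico _ _).biUnion fun b hb => ih b hb.2 hb.1)
    rw [setOf_isValidTuple_eq_biUnion hn]
    refine (finite_toSet _).biUnion fun a ha => (hfinite.subset fun L hL => ?_).image _
    have han : a ≤ n := (mem_Icc.1 ha).2
    obtain ⟨rfl, -⟩ | ⟨b, hb, hL, hab⟩ := (isValidTuple_append_Icc_iff han hn).1 hL
    · exact .inl rfl
    · have hbn : b < n := by split_ifs at hab <;> omega
      exact .inr (Set.mem_biUnion (Set.mem_Ico.2 ⟨hb, hbn⟩) hL)

theorem numValid_eq_sum_ncard_validPrefixes (hn : cmin ≤ n) :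
    numValid cmin n M = ∑ a ∈ Icc cmin n, (validPrefixes cmin M a n).ncard := by
  have hfinite : ∀ a ∈ (Icc cmin n : Set ℕ),
      ((· ++ [Icc a n]) '' validPrefixes cmin M a n).Finite := fun a ha =>
    (finite_setOf_isValidTuple hn).subset
      (setOf_isValidTuple_eq_biUnion hn ▸ Set.subset_biUnion_of_mem ha)
  have hdisjoint : (Icc cmin n : Set ℕ).PairwiseDisjoint
      fun a => (· ++ [Icc a n]) '' validPrefixes cmin M a n := by
    intro a ha a' ha' hne
    refine Set.disjoint_left.2 ?_
    rintro _ ⟨L, -, rfl⟩ ⟨L', -, heq⟩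
    have hIcc : Icc a' n = Icc a n := by simpa using (List.append_inj' heq rfl).2
    have ha_mem : a ∈ Icc a' n := hIcc ▸ left_mem_Icc.2 (mem_Icc.1 ha).2
    have ha'_mem : a' ∈ Icc a n := hIcc ▸ left_mem_Icc.2 (mem_Icc.1 ha').2
    exact hne (le_antisymm (mem_Icc.1 ha'_mem).1 (mem_Icc.1 ha_mem).1)
  rw [numValid, setOf_isValidTuple_eq_biUnion hn,
    (finite_toSet _).ncard_biUnion hfinite hdisjoint, finsum_mem_coe_finset]
  exact sum_congr rfl fun a _ => Set.ncard_image_of_injective _ (List.append_left_injective _)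

theorem numValid_succ_add_ncard_validPrefixes (hn : cmin ≤ n) :
    numValid cmin (n + 1) M + (validPrefixes cmin M n n).ncard =
      2 * numValid cmin n M + (validPrefixes cmin M n (n + 1)).ncard := by
  have hstable : ∀ a ∈ Ico cmin n,
      (validPrefixes cmin M a (n + 1)).ncard = (validPrefixes cmin M a n).ncard := by
    intro a ha
    obtain ⟨hca, han⟩ := mem_Ico.1 ha
    rw [validPrefixes_congr (by omega) han.le hca fun _ => by omega]
  have hN : numValid cmin n M =
      (validPrefixes cmin M n n).ncard + ∑ a ∈ Ico cmin n, (validPrefixes cmin M a n).ncard := by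
    rw [numValid_eq_sum_ncard_validPrefixes hn, Icc_eq_cons_Ico hn, sum_cons]
  have hNsucc : numValid cmin (n + 1) M = numValid cmin n M +
      ((validPrefixes cmin M n (n + 1)).ncard +
        ∑ a ∈ Ico cmin n, (validPrefixes cmin M a n).ncard) := by
    have hn_succ : cmin ≤ n + 1 := Nat.le_succ_of_le hn
    rw [numValid_eq_sum_ncard_validPrefixes hn_succ, Icc_eq_cons_Ico hn_succ, sum_cons,
      validPrefixes_succ_self hn, ← numValid, Ico_add_one_right_eq_Icc, Icc_eq_cons_Ico hn,
      sum_cons, sum_congr rfl hstable]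
  omega

theorem numValid_succ_of_le_one (hn : cmin ≤ n) (hM : M n ≤ 1) :
    numValid cmin (n + 1) M = 2 * numValid cmin n M := by
  have hcount := numValid_succ_add_ncard_validPrefixes (M := M) hn
  rw [validPrefixes_congr n.le_succ le_rfl hn fun h => absurd h hM.not_gt] at hcount
  exact Nat.add_right_cancel hcount

theorem numValid_add_two_add_numValid (hn : cmin ≤ n) (hM : 1 < M (n + 1)) :
    numValid cmin (n + 2) M + numValid cmin n M = 3 * numValid cmin (n + 1) M := by
  have hcount : numValid cmin (n + 2) M + (validPrefixes cmin M (n + 1) (n + 1)).ncard =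
      2 * numValid cmin (n + 1) M + (validPrefixes cmin M (n + 1) (n + 2)).ncard :=
    numValid_succ_add_ncard_validPrefixes (Nat.le_succ_of_le hn)
  rw [validPrefixes_succ_self hn, validPrefixes_self_succ (by omega) hM, ← numValid, ← numValid]
    at hcount
  omega

end ValidTuples

theorem numValid_recursion_general (cmin cmax : ℕ) (M : ℕ → ℕ) (hlt : cmin < cmax) :
    (M (cmax - 1) ≤ 1 →
      numValid cmin cmax M = 2 * numValid cmin (cmax - 1) M) ∧
    (1 < M (cmax - 1) → cmin + 2 ≤ cmax →
      (numValid cmin cmax M : ℤ) =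
        3 * (numValid cmin (cmax - 1) M : ℤ) - (numValid cmin (cmax - 2) M : ℤ)) := by
  constructor
  · intro hM
    obtain ⟨n, rfl⟩ := Nat.exists_eq_add_of_lt hlt
    exact numValid_succ_of_le_one (by omega) hM
  · intro hM htwo
    obtain ⟨n, rfl⟩ := Nat.exists_eq_add_of_le' (le_of_add_le_right htwo)
    have := numValid_add_two_add_numValid (Nat.add_le_add_iff_right.1 htwo) hM
    simp only [Nat.add_sub_cancel, show n + 2 - 1 = n + 1 from rfl]
    omega

/-- The recursion for the number of valid tuples (the combinatorial form of the
count of local Arthur packets containing a tempered block not starting at zero):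
if `m_{cmax-1} = 1` then `N(M) = 2·N(M')`, and if `m_{cmax-1} ≥ 3` and
`cmax ≥ cmin + 2` then `N(M) = 3·N(M') − N(M'')`. -/
theorem numValid_recursion (cmin cmax : ℕ) (M : ℕ → ℕ)
    (hlt : cmin < cmax) (hM : IsBlockTuple cmin cmax M) :
    (M (cmax - 1) = 1 →
      numValid cmin cmax M = 2 * numValid cmin (cmax - 1) M) ∧
    (3 ≤ M (cmax - 1) → cmin + 2 ≤ cmax →
      (numValid cmin cmax M : ℤ) =
        3 * (numValid cmin (cmax - 1) M : ℤ) - (numValid cmin (cmax - 2) M : ℤ)) :=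
  (numValid_recursion_general cmin cmax M hlt).imp (fun h hone => h hone.le)
    fun h hthree => h (by omega)
end

section
/- Fix integers 0 ≤ c_min < c_max and a block-tuple M = (m_{c_min}, …, m_{c_max}). The map (S_1, …, S_k) ↦ (S_1, …, S_{k−1}) is a bijection from the set of valid tuples S for M whose last set satisfies S_k = {c_max} onto the set of valid tuples for M'; its inverse appends the singleton {c_max} as a new last set. -/
/-!
An element shared by two sets of a valid tuple forces the later of them to have at least two
elements. A final singleton is therefore disjoint from all the earlier sets, so deleting it
deletes exactly its element from the union; the remaining conditions constrain a final singleton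
only by requiring that nothing to its left exceeds its element.
-/

section TupleConditions

variable {α : Type*}

/-- Condition (2) of `IsValidTuple` for an arbitrary finite set: `I` is the union of the entries
of `S`. Stated by membership, so that no decidable equality is needed. -/
def IsUnionOf (I : Finset α) (S : List (Finset α)) : Prop :=
  ∀ c, c ∈ I ↔ ∃ A ∈ S, c ∈ A

/-- Condition (3) of `IsValidTuple`, as a relation between an earlier set `A` and a later set
`B`: the elements of `A` are at most those of `B`. -/
def WeaklyPrecedes [LE α] (A B : Finset α) : Prop :=
  ∀ s ∈ A, ∀ t ∈ B, s ≤ t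

/-- Condition (4) of `IsValidTuple`: only adjacent entries of `S` may meet, the later of the two
then has at least two elements, and every common element `c` satisfies `1 < M c`. -/
def HasAdmissibleOverlaps (M : α → ℕ) (S : List (Finset α)) : Prop :=
  ∀ i j : Fin S.length, i < j → ∀ c, c ∈ S.get i → c ∈ S.get j →
    (j : ℕ) = (i : ℕ) + 1 ∧ 2 ≤ (S.get j).card ∧ 1 < M c

/-- Condition (5) of `IsValidTuple`, as a relation between consecutive sets `A` and `B`: if `B`
has at least two elements and its minimum `c` satisfies `1 < M c`, then `c` already lies in
`A`. -/
def ContainsMinOf [LE α] (M : α → ℕ) (A B : Finset α) : Prop :=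
  2 ≤ B.card → ∀ c ∈ B, (∀ x ∈ B, c ≤ x) → 1 < M c → c ∈ A

theorem isUnionOf_insert_append_singleton_iff [DecidableEq α] {I : Finset α}
    {T : List (Finset α)} {x : α} (hxI : x ∉ I) (hxT : ∀ A ∈ T, x ∉ A) :
    IsUnionOf (insert x I) (T ++ [{x}]) ↔ IsUnionOf I T := by
  refine forall_congr' fun c => ?_
  simp only [Finset.mem_insert, List.mem_append, List.mem_singleton, or_and_right, exists_or,
    exists_eq_left, Finset.mem_singleton]
  rcases eq_or_ne c x with rfl | hne
  · have hcT : ¬∃ A ∈ T, c ∈ A := fun ⟨A, hA, hcA⟩ => hxT A hA hcA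
    simp only [hxI, hcT, or_false, or_true]
  · simp only [hne, false_or, or_false]

theorem forall_get_lt_append_singleton_iff {r : ℕ → ℕ → α → α → Prop} {l : List α} {a : α} :
    (∀ i j : Fin (l ++ [a]).length, i < j → r i j ((l ++ [a]).get i) ((l ++ [a]).get j)) ↔
      (∀ i j : Fin l.length, i < j → r i j (l.get i) (l.get j)) ∧
        ∀ i : Fin l.length, r i l.length (l.get i) a := by
  simp only [Fin.forall_iff, Fin.mk_lt_mk, List.get_eq_getElem, List.length_append,
    List.length_singleton]
  grind

theorem hasAdmissibleOverlaps_append_singleton_iff {M : α → ℕ} {T : List (Finset α)}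
    {A : Finset α} (hA : A.card ≤ 1) :
    HasAdmissibleOverlaps M (T ++ [A]) ↔
      HasAdmissibleOverlaps M T ∧ ∀ B ∈ T, Disjoint B A := by
  have hdisj (i j : ℕ) (B : Finset α) :
      (∀ c, c ∈ B → c ∈ A → j = i + 1 ∧ 2 ≤ A.card ∧ 1 < M c) ↔ Disjoint B A := by
    simp only [show ¬2 ≤ A.card by omega, false_and, and_false, Finset.disjoint_left]
  refine (forall_get_lt_append_singleton_iff (r := fun i j (B C : Finset α) =>
    ∀ c, c ∈ B → c ∈ C → j = i + 1 ∧ 2 ≤ C.card ∧ 1 < M c)).trans (and_congr_right' ?_)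
  simp only [hdisj, List.forall_mem_iff_get]

theorem containsMinOf_of_card_le_one [LE α] {M : α → ℕ} {A B : Finset α} (hB : B.card ≤ 1) :
    ContainsMinOf M A B :=
  fun hB' => absurd hB' (by omega)

theorem isChain_containsMinOf_append_singleton_iff [LE α] {M : α → ℕ} {T : List (Finset α)}
    {A : Finset α} (hA : A.card ≤ 1) :
    (T ++ [A]).IsChain (ContainsMinOf M) ↔ T.IsChain (ContainsMinOf M) := by
  refine ⟨List.IsChain.left_of_append, fun hT => hT.append (List.isChain_singleton A) ?_⟩
  rintro B - _ ⟨⟩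
  exact containsMinOf_of_card_le_one hA

theorem isChain_containsMinOf_iff_get [LE α] {M : α → ℕ} {S : List (Finset α)} :
    S.IsChain (ContainsMinOf M) ↔
      ∀ i : Fin S.length, 1 ≤ (i : ℕ) → 2 ≤ (S.get i).card →
        ∀ c, c ∈ S.get i → (∀ x ∈ S.get i, c ≤ x) → 1 < M c →
          ∃ j : Fin S.length, (j : ℕ) + 1 = (i : ℕ) ∧ c ∈ S.get j := by
  rw [List.isChain_iff_getElem]
  constructor
  · rintro hS ⟨_ | i, hi⟩ hpos hcard c hc hmin hMc
    · exact absurd hpos (by simp)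
    · exact ⟨⟨i, by omega⟩, rfl, hS i hi hcard c hc hmin hMc⟩
  · intro hS i hi hcard c hc hmin hMc
    obtain ⟨j, hji, hcj⟩ := hS ⟨i + 1, hi⟩ (by simp) hcard c hc hmin hMc
    obtain rfl : (j : ℕ) = i := Nat.succ.inj hji
    exact hcj

end TupleConditions

theorem isValidTuple_iff_s1 {cmin cmax : ℕ} {M : ℕ → ℕ} {S : List (Finset ℕ)} :
    IsValidTuple cmin cmax M S ↔
      (∀ A ∈ S, ∃ a b, a ≤ b ∧ A = Finset.Icc a b) ∧ IsUnionOf (Finset.Icc cmin cmax) S ∧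
        S.Pairwise WeaklyPrecedes ∧ HasAdmissibleOverlaps M S ∧ S.IsChain (ContainsMinOf M) := by
  simp only [IsUnionOf, List.forall_mem_iff_get, List.exists_mem_iff_get,
    List.pairwise_iff_get, isChain_containsMinOf_iff_get]
  rfl

theorem isValidTuple_append_singleton_iff {cmin c : ℕ} {M : ℕ → ℕ} {T : List (Finset ℕ)}
    (hle : cmin ≤ c + 1) :
    IsValidTuple cmin (c + 1) M (T ++ [{c + 1}]) ↔ IsValidTuple cmin c M T := by
  have hcard : ({c + 1} : Finset ℕ).card ≤ 1 := (Finset.card_singleton _).le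
  have hnotMem : c + 1 ∉ Finset.Icc cmin c := by simp
  simp only [isValidTuple_iff_s1, List.forall_mem_append, List.forall_mem_singleton,
    List.pairwise_append, hasAdmissibleOverlaps_append_singleton_iff hcard,
    isChain_containsMinOf_append_singleton_iff hcard, Finset.disjoint_singleton_right,
    ← Finset.insert_Icc_right_eq_Icc_add_one hle]
  constructor
  · rintro ⟨⟨hIcc, -⟩, hunion, ⟨hprec, -⟩, ⟨hoverlap, hdisj⟩, hmin⟩
    exact ⟨hIcc, (isUnionOf_insert_append_singleton_iff hnotMem hdisj).1 hunion, hprec,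
      hoverlap, hmin⟩
  · rintro ⟨hIcc, hunion, hprec, hoverlap, hmin⟩
    have hbound : ∀ A ∈ T, ∀ s ∈ A, s ≤ c := fun A hA s hs =>
      (Finset.mem_Icc.1 ((hunion s).2 ⟨A, hA, hs⟩)).2
    have hdisj : ∀ A ∈ T, c + 1 ∉ A := fun A hA hc =>
      Nat.not_succ_le_self c (hbound A hA _ hc)
    have hlast : ∀ A ∈ T, WeaklyPrecedes A {c + 1} := fun A hA s hs t ht =>
      Finset.mem_singleton.1 ht ▸ (hbound A hA s hs).trans c.le_succ
    exact ⟨⟨hIcc, c + 1, c + 1, le_rfl, (Finset.Icc_self _).symm⟩,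
      (isUnionOf_insert_append_singleton_iff hnotMem hdisj).2 hunion,
      ⟨hprec, List.pairwise_singleton _ _, hlast⟩,
      ⟨hoverlap, hdisj⟩, hmin⟩

theorem invOn_append_singleton_dropLast {α : Type*} (a : α) (s t : Set (List α))
    (hs : ∀ l ∈ s, l.getLast? = some a) :
    Set.InvOn (fun l => l ++ [a]) (fun l => l.dropLast) s t :=
  ⟨fun l hl => List.dropLast_append_getLast? a (hs l hl), fun _ _ => List.dropLast_concat⟩

theorem bijOn_dropLast_lastSingleton_general (cmin c : ℕ) (M : ℕ → ℕ) (hle : cmin ≤ c + 1) :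
    Set.BijOn (fun S : List (Finset ℕ) => S.dropLast)
      {S | IsValidTuple cmin (c + 1) M S ∧ S.getLast? = some {c + 1}}
      {S' | IsValidTuple cmin c M S'} ∧
    Set.InvOn (fun S' : List (Finset ℕ) => S' ++ [{c + 1}])
      (fun S : List (Finset ℕ) => S.dropLast)
      {S | IsValidTuple cmin (c + 1) M S ∧ S.getLast? = some {c + 1}}
      {S' | IsValidTuple cmin c M S'} := by
  have hinv := invOn_append_singleton_dropLast {c + 1}
    {S | IsValidTuple cmin (c + 1) M S ∧ S.getLast? = some {c + 1}}
    {S' | IsValidTuple cmin c M S'} fun _ hS => hS.2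
  refine ⟨hinv.bijOn ?mapsTo_dropLast ?mapsTo_append, hinv⟩
  case mapsTo_dropLast =>
    rintro S ⟨hvalid, hlast⟩
    rw [← List.dropLast_append_getLast? _ hlast] at hvalid
    exact (isValidTuple_append_singleton_iff hle).1 hvalid
  case mapsTo_append =>
    exact fun T hT => ⟨(isValidTuple_append_singleton_iff hle).2 hT, List.getLast?_concat⟩

/-- Dropping the last set is a bijection from the valid tuples for `M` whose last
set is the singleton `{cmax}` onto the valid tuples for `M'`; its inverse appends
the singleton `{cmax}` as a new last set. -/
theorem bijOn_dropLast_lastSingleton (cmin cmax : ℕ) (M : ℕ → ℕ)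
    (hlt : cmin < cmax) (hM : IsBlockTuple cmin cmax M) :
    Set.BijOn (fun S : List (Finset ℕ) => S.dropLast)
      {S : List (Finset ℕ) |
        IsValidTuple cmin cmax M S ∧ S.getLast? = some ({cmax} : Finset ℕ)}
      {S' : List (Finset ℕ) | IsValidTuple cmin (cmax - 1) M S'} ∧
    Set.InvOn (fun S' : List (Finset ℕ) => S' ++ [({cmax} : Finset ℕ)])
      (fun S : List (Finset ℕ) => S.dropLast)
      {S : List (Finset ℕ) |
        IsValidTuple cmin cmax M S ∧ S.getLast? = some ({cmax} : Finset ℕ)}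
      {S' : List (Finset ℕ) | IsValidTuple cmin (cmax - 1) M S'} := by
  obtain ⟨c, rfl⟩ := Nat.exists_eq_add_one_of_ne_zero (Nat.ne_zero_of_lt hlt)
  exact bijOn_dropLast_lastSingleton_general cmin c M hlt.le
end

section
/- Fix integers 0 ≤ c_min < c_max and a block-tuple M = (m_{c_min}, …, m_{c_max}) with m_{c_max−1} > 1. Every valid tuple S = (S_1, …, S_k) for M satisfies exactly one of the following three conditions: (i) S_k = {c_max}; (ii) c_max − 1 belongs to more than one of the sets S_i; (iii) c_max − 1 belongs to exactly one of the sets S_i, say S_{i_0}, and c_max ∈ S_{i_0}. -/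
/-!
Write `b = cmax` and `a = b - 1`. Everything hinges on whether some `S_i` contains both `a` and `b`.
If one does, the last set is not `{b}`: otherwise `b` would be shared with a later singleton, or `a`
would lie in `{b}`. If none does, the last set comes strictly after a set containing `a`, lies in
`{a, b}`, and omits `a`, since a set sharing `a` with an earlier one has a second element, which
can only be `b`. That same remark shows that (ii) puts `a` and `b` in a common set, and within this
case (ii) and (iii) are told apart by whether `a` lies in several sets or in one.
-/

/-- A family of nonempty sets climbing weakly from left to right, in which a set that shares an
element with an earlier one is not a singleton: an abstraction of the conditions (1), (3) and (4) on
valid tuples to arbitrary ordered index and element types. -/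
structure IsStaircase {ι α : Type*} [Preorder ι] [Preorder α] (S : ι → Set α) : Prop where
  nonempty (i : ι) : (S i).Nonempty
  le_of_lt {i j : ι} (hij : i < j) {s t : α} (hs : s ∈ S i) (ht : t ∈ S j) : s ≤ t
  nontrivial_of_lt {i j : ι} (hij : i < j) {c : α} (hi : c ∈ S i) (hj : c ∈ S j) :
    (S j).Nontrivial

namespace IsStaircase

section PartialOrder

variable {ι α : Type*} [PartialOrder ι] [PartialOrder α] {S : ι → Set α} {i j l : ι} {a b c : α}

theorem eq_of_mem_of_subsingleton (hS : IsStaircase S) (hij : i ≤ j) (hj : (S j).Subsingleton)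
    (hci : c ∈ S i) (hcj : c ∈ S j) : i = j :=
  hij.eq_of_not_lt fun hlt ↦ Set.not_nontrivial_iff.2 hj (hS.nontrivial_of_lt hlt hci hcj)

theorem eq_or_eq_of_mem_of_lt (hS : IsStaircase S) (hab : a ⋖ b) (hb : b ∈ upperBounds (S j))
    (hij : i < j) (hai : a ∈ S i) (hcj : c ∈ S j) : c = a ∨ c = b :=
  hab.eq_or_eq (hS.le_of_lt hij hai hcj) (hb hcj)

theorem mem_of_mem_of_mem_of_lt (hS : IsStaircase S) (hab : a ⋖ b) (hb : b ∈ upperBounds (S j))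
    (hij : i < j) (hai : a ∈ S i) (haj : a ∈ S j) : b ∈ S j := by
  obtain ⟨x, hxj, hxa⟩ := (hS.nontrivial_of_lt hij hai haj).exists_ne a
  have hxb : x = b := (hS.eq_or_eq_of_mem_of_lt hab hb hij hai hxj).resolve_left hxa
  exact hxb ▸ hxj

theorem eq_singleton_of_mem_of_notMem_of_lt (hS : IsStaircase S) (hab : a ⋖ b)
    (hb : b ∈ upperBounds (S j)) (hij : i < j) (hai : a ∈ S i) (haj : a ∉ S j) : S j = {b} :=
  (hS.nonempty j).subset_singleton_iff.1 fun _ hx ↦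
    (hS.eq_or_eq_of_mem_of_lt hab hb hij hai hx).resolve_left fun hxa ↦ haj (hxa ▸ hx)

theorem not_exists_mem_and_mem_of_eq_singleton (hS : IsStaircase S) (hl : IsTop l) (hab : a ≠ b)
    (hlb : S l = {b}) : ¬∃ i, a ∈ S i ∧ b ∈ S i := by
  rintro ⟨i, hai, hbi⟩
  have hil : i = l :=
    hS.eq_of_mem_of_subsingleton (hl i) (hlb ▸ Set.subsingleton_singleton) hbi (by simp [hlb])
  rw [hil, hlb] at hai
  exact hab hai

end PartialOrder

section LinearOrder

variable {ι α : Type*} [LinearOrder ι] [PartialOrder α] {S : ι → Set α} {l : ι} {a b : α}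

theorem exists_mem_and_mem_of_ne (hS : IsStaircase S) (hab : a ⋖ b)
    (hb : b ∈ upperBounds (⋃ i, S i)) (ha : ∃ i j, i ≠ j ∧ a ∈ S i ∧ a ∈ S j) :
    ∃ i, a ∈ S i ∧ b ∈ S i := by
  obtain ⟨i, j, hij, hai, haj⟩ := ha
  wlog hlt : i < j generalizing i j
  · exact this j i hij.symm haj hai (hij.lt_or_gt.resolve_left hlt)
  have hbj : b ∈ upperBounds (S j) := upperBounds_mono_set (Set.subset_iUnion S j) hb
  exact ⟨j, haj, hS.mem_of_mem_of_mem_of_lt hab hbj hlt hai haj⟩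

theorem eq_singleton_of_not_exists_mem_and_mem (hS : IsStaircase S) (hl : IsTop l)
    (hab : a ⋖ b) (ha : a ∈ ⋃ i, S i) (hb : IsGreatest (⋃ i, S i) b)
    (hnot : ¬∃ i, a ∈ S i ∧ b ∈ S i) : S l = {b} := by
  obtain ⟨p, hap⟩ := Set.mem_iUnion.1 ha
  obtain ⟨q, hbq⟩ := Set.mem_iUnion.1 hb.1
  have hpq : p < q := by
    refine lt_of_not_ge fun hqp ↦ ?_
    rcases hqp.eq_or_lt with rfl | hqp
    · exact hnot ⟨q, hap, hbq⟩
    · exact hab.lt.not_ge (hS.le_of_lt hqp hbq hap)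
  have hpl : p < l := hpq.trans_le (hl q)
  have hal : a ∉ S l := fun hal ↦
    hnot (hS.exists_mem_and_mem_of_ne hab hb.2 ⟨p, l, hpl.ne, hap, hal⟩)
  have hbl : b ∈ upperBounds (S l) := upperBounds_mono_set (Set.subset_iUnion S l) hb.2
  exact hS.eq_singleton_of_mem_of_notMem_of_lt hab hbl hpl hap hal

end LinearOrder

end IsStaircase

theorem exists_mem_and_forall_eq_iff {ι α : Type*} {S : ι → Set α} {a b : α} :
    (∃ i₀, a ∈ S i₀ ∧ b ∈ S i₀ ∧ ∀ i, a ∈ S i → i = i₀) ↔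
      (∃ i, a ∈ S i ∧ b ∈ S i) ∧ ¬∃ i j, i ≠ j ∧ a ∈ S i ∧ a ∈ S j := by
  constructor
  · rintro ⟨i₀, ha, hb, huniq⟩
    exact ⟨⟨i₀, ha, hb⟩, fun ⟨i, j, hij, hi, hj⟩ ↦ hij ((huniq i hi).trans (huniq j hj).symm)⟩
  · rintro ⟨⟨i₀, ha, hb⟩, hnot⟩
    exact ⟨i₀, ha, hb, fun i hi ↦ by_contra fun hne ↦ hnot ⟨i, i₀, hne, hi, ha⟩⟩

theorem exists_isTop_and_getLastD_eq_get {β : Type*} {S : List β} (hS : S ≠ []) (d : β) :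
    ∃ l : Fin S.length, IsTop l ∧ S.getLastD d = S.get l := by
  have hpos : 0 < S.length := List.length_pos_of_ne_nil hS
  refine ⟨⟨S.length - 1, by lia⟩, fun i ↦ Fin.le_def.2 (by simp only; lia), ?_⟩
  rw [List.getLastD_eq_getLast?, List.getLast?_eq_some_getLast hS, Option.getD_some,
    List.getLast_eq_getElem, List.get_eq_getElem]

namespace IsValidTuple

variable {cmin cmax : ℕ} {M : ℕ → ℕ} {S : List (Finset ℕ)}

theorem isStaircase (hS : IsValidTuple cmin cmax M S) :
    IsStaircase fun i ↦ (S.get i : Set ℕ) := by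
  obtain ⟨hinterval, -, hmono, hoverlap, -⟩ := hS
  refine ⟨fun i ↦ ?_, fun hij _ _ hs ht ↦ hmono _ _ hij _ hs _ ht, fun hij c hi hj ↦ ?_⟩
  · obtain ⟨a, b, hab, hi⟩ := hinterval i
    simpa only [hi, Finset.coe_nonempty, Finset.nonempty_Icc] using hab
  · exact Finset.one_lt_card_iff_nontrivial.1 (hoverlap _ _ hij c hi hj).2.1

theorem iUnion_eq_Icc (hS : IsValidTuple cmin cmax M S) :
    ⋃ i, (S.get i : Set ℕ) = Set.Icc cmin cmax := by
  ext c
  simpa only [Set.mem_iUnion, Finset.mem_coe, Finset.mem_Icc, Set.mem_Icc] using (hS.2.1 c).symm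

theorem ne_nil (hS : IsValidTuple cmin cmax M S) (hle : cmin ≤ cmax) : S ≠ [] := by
  obtain ⟨i, -⟩ := (hS.2.1 cmax).1 (Finset.right_mem_Icc.2 hle)
  exact List.ne_nil_of_length_pos i.pos

end IsValidTuple

theorem validTuple_trichotomy_general {ι α : Type*} [LinearOrder ι] [PartialOrder α]
    {S : ι → Set α} (hS : IsStaircase S) {l : ι} (hl : IsTop l) {a b : α} (hab : a ⋖ b)
    (ha : a ∈ ⋃ i, S i) (hb : IsGreatest (⋃ i, S i) b) :
    let P1 : Prop := S l = {b}
    let P2 : Prop := ∃ i j, i ≠ j ∧ a ∈ S i ∧ a ∈ S j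
    let P3 : Prop := ∃ i₀, a ∈ S i₀ ∧ b ∈ S i₀ ∧ ∀ i, a ∈ S i → i = i₀
    (P1 ∧ ¬P2 ∧ ¬P3) ∨ (¬P1 ∧ P2 ∧ ¬P3) ∨ (¬P1 ∧ ¬P2 ∧ P3) := by
  intro P1 P2 P3
  have hP1 : P1 ↔ ¬∃ i, a ∈ S i ∧ b ∈ S i :=
    ⟨hS.not_exists_mem_and_mem_of_eq_singleton hl hab.ne,
      hS.eq_singleton_of_not_exists_mem_and_mem hl hab ha hb⟩
  have hP2 : P2 → ∃ i, a ∈ S i ∧ b ∈ S i := hS.exists_mem_and_mem_of_ne hab hb.2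
  have hP3 : P3 ↔ (∃ i, a ∈ S i ∧ b ∈ S i) ∧ ¬P2 := exists_mem_and_forall_eq_iff
  clear_value P1 P2 P3
  by_cases hcommon : ∃ i, a ∈ S i ∧ b ∈ S i <;> simp only [hcommon] at hP1 hP2 hP3 <;> tauto

/-- Suppose `m_{cmax-1} > 1`. Every valid tuple for `M` satisfies exactly one of:
(i) the last set is `{cmax}`; (ii) `cmax - 1` belongs to more than one of the
sets; (iii) `cmax - 1` belongs to exactly one of the sets, and that set also
contains `cmax`. -/
theorem validTuple_trichotomy (cmin cmax : ℕ) (M : ℕ → ℕ)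
    (hlt : cmin < cmax) (hM : IsBlockTuple cmin cmax M)
    (h1 : 1 < M (cmax - 1))
    (S : List (Finset ℕ)) (hS : IsValidTuple cmin cmax M S) :
    let P1 : Prop := S.getLastD ∅ = ({cmax} : Finset ℕ)
    let P2 : Prop := ∃ i j : Fin S.length, i ≠ j ∧
      cmax - 1 ∈ S.get i ∧ cmax - 1 ∈ S.get j
    let P3 : Prop := ∃ i0 : Fin S.length, cmax - 1 ∈ S.get i0 ∧ cmax ∈ S.get i0 ∧
      ∀ i : Fin S.length, cmax - 1 ∈ S.get i → i = i0
    (P1 ∧ ¬P2 ∧ ¬P3) ∨ (¬P1 ∧ P2 ∧ ¬P3) ∨ (¬P1 ∧ ¬P2 ∧ P3) := by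
  obtain ⟨l, hl, hlast⟩ := exists_isTop_and_getLastD_eq_get (hS.ne_nil hlt.le) ∅
  rw [hlast, ← Finset.coe_eq_singleton]
  exact validTuple_trichotomy_general hS.isStaircase hl (Nat.covBy_iff_add_one_eq.2 (by lia))
    (hS.iUnion_eq_Icc ▸ ⟨by lia, by lia⟩) (hS.iUnion_eq_Icc ▸ isGreatest_Icc hlt.le)
end

section
/- Fix integers 0 ≤ c_min < c_max and a block-tuple M = (m_{c_min}, …, m_{c_max}) with m_{c_max−1} > 1. If S = (S_1, …, S_k) is a valid tuple for M in which c_max − 1 belongs to more than one of the sets S_i, then c_max − 1 belongs to exactly the two sets S_{k−1} and S_k, and S_k = {c_max − 1, c_max}. Moreover, the map S ↦ (S_1, …, S_{k−1}) is a bijection from the set of such valid tuples for M onto the set of all valid tuples for M'; its inverse appends the set {c_max − 1, c_max}. -/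
/-!
The driving fact: if a nonempty set `B` comes after a set `A` containing `c`, then `B` has an
element above `c`, since otherwise `B = {c}` overlaps `A` without having two elements. Hence `cmax`
lies in the last set only, and overlapping sets are automatically consecutive. If `cmax - 1` is
shared, the later set containing it has an element above `cmax - 1`, so it is `{cmax - 1, cmax}` and
it is the last set.

As overlapping sets are automatically consecutive, validity splits into conditions on the members,
on pairs of members and on consecutive members, which are easy to follow when a last set is dropped
or appended.
-/

/-- Conditions (3) and (4) of validity for a set `A` and a later set `B`, without the requirement
that overlapping sets be consecutive. -/
def Precedes (M : ℕ → ℕ) (A B : Finset ℕ) : Prop :=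
  (∀ s ∈ A, ∀ t ∈ B, s ≤ t) ∧ ∀ c ∈ A, c ∈ B → 2 ≤ B.card ∧ 1 < M c

/-- Condition (5) of validity for a set `A` and the next set `B`, with `min B` expressed as an
element of `B` that is a lower bound of `B`. -/
def IsGlued (M : ℕ → ℕ) (A B : Finset ℕ) : Prop :=
  2 ≤ B.card → ∀ c ∈ B, (∀ x ∈ B, c ≤ x) → 1 < M c → c ∈ A

/-- The number `c` belongs to more than one set of the tuple `S`; sets are told apart by their
position, not by their value. -/
def IsShared (c : ℕ) (S : List (Finset ℕ)) : Prop :=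
  ∃ i j : Fin S.length, i ≠ j ∧ c ∈ S.get i ∧ c ∈ S.get j

section

variable {cmin cmax b c d : ℕ} {M : ℕ → ℕ} {S : List (Finset ℕ)} {A B T : Finset ℕ}

theorem isShared_iff_exists_lt :
    IsShared c S ↔ ∃ i j : Fin S.length, i < j ∧ c ∈ S.get i ∧ c ∈ S.get j := by
  constructor
  · rintro ⟨i, j, hij, hi, hj⟩
    rcases hij.lt_or_gt with hlt | hgt
    · exact ⟨i, j, hlt, hi, hj⟩
    · exact ⟨j, i, hgt, hj, hi⟩
  · rintro ⟨i, j, hij, hi, hj⟩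
    exact ⟨i, j, hij.ne, hi, hj⟩

theorem isShared_append_singleton (hA : A ∈ S) (hcA : c ∈ A) (hcT : c ∈ T) :
    IsShared c (S ++ [T]) := by
  obtain ⟨i, hi, rfl⟩ := List.mem_iff_getElem.1 hA
  refine isShared_iff_exists_lt.2
    ⟨⟨i, by simpa using hi.trans (Nat.lt_succ_self _)⟩, ⟨S.length, by simp⟩, hi, ?_, ?_⟩
  · simpa [List.getElem_append_left hi] using hcA
  · simpa using hcT

theorem Precedes.exists_gt (h : Precedes M A B) (hc : c ∈ A) (hB : B.Nonempty) :
    ∃ x ∈ B, c < x := by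
  by_contra! hle
  have hBc : B = {c} := Finset.eq_singleton_iff_nonempty_unique_mem.2
    ⟨hB, fun x hx => (hle x hx).antisymm (h.1 c hc x hx)⟩
  subst hBc
  simpa using h.2 c hc (Finset.mem_singleton_self c)

theorem eq_add_one_of_pairwise_precedes (hne : ∀ T ∈ S, T.Nonempty) (hS : S.Pairwise (Precedes M))
    {i j : Fin S.length} (hij : i < j) (hi : c ∈ S.get i) (hj : c ∈ S.get j) :
    (j : ℕ) = i + 1 := by
  rw [List.pairwise_iff_get] at hS
  by_contra hne_succ
  let k : Fin S.length := ⟨i + 1, by omega⟩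
  have hik : i < k := Nat.lt_succ_self i
  have hkj : k < j := by simp only [k, Fin.lt_def] at *; omega
  obtain ⟨x, hx, hcx⟩ := (hS i k hik).exists_gt hi (hne _ (List.get_mem S k))
  exact hcx.not_ge ((hS k j hkj).1 x hx c hj)

theorem nonempty_of_eq_Icc (h : ∃ p q : ℕ, p ≤ q ∧ T = Finset.Icc p q) : T.Nonempty := by
  obtain ⟨p, q, hpq, rfl⟩ := h
  exact Finset.nonempty_Icc.2 hpq

theorem isChain_isGlued_iff_get :
    S.IsChain (IsGlued M) ↔ ∀ i : Fin S.length, 1 ≤ (i : ℕ) → 2 ≤ (S.get i).card →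
      ∀ c : ℕ, c ∈ S.get i → (∀ x ∈ S.get i, c ≤ x) → 1 < M c →
      ∃ j : Fin S.length, (j : ℕ) + 1 = (i : ℕ) ∧ c ∈ S.get j := by
  rw [List.isChain_iff_getElem]
  constructor
  · rintro h ⟨_ | i, hi⟩ hpos hcard c hc hmin hMc
    · simp at hpos
    · exact ⟨⟨i, by omega⟩, rfl, h i hi hcard c hc hmin hMc⟩
  · intro h i hi hcard c hc hmin hMc
    obtain ⟨⟨j, hj⟩, hji, hcj⟩ := h ⟨i + 1, hi⟩ (Nat.le_add_left 1 i) hcard c hc hmin hMc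
    obtain rfl : j = i := by simpa using hji
    exact hcj

theorem isValidTuple_iff_pairwise_isChain :
    IsValidTuple cmin cmax M S ↔
      (∀ T ∈ S, ∃ p q : ℕ, p ≤ q ∧ T = Finset.Icc p q) ∧
      (∀ c : ℕ, c ∈ Finset.Icc cmin cmax ↔ ∃ T ∈ S, c ∈ T) ∧
      S.Pairwise (Precedes M) ∧ S.IsChain (IsGlued M) := by
  rw [IsValidTuple, ← isChain_isGlued_iff_get, List.forall_mem_iff_get]
  simp only [List.exists_mem_iff_get]
  constructor
  · rintro ⟨hIcc, hcover, hle, hoverlap, hglued⟩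
    exact ⟨hIcc, hcover, List.pairwise_iff_get.2 fun i j hij =>
      ⟨hle i j hij, fun c hi hj => (hoverlap i j hij c hi hj).2⟩, hglued⟩
  · rintro ⟨hIcc, hcover, hprec, hglued⟩
    have hne : ∀ T ∈ S, T.Nonempty :=
      List.forall_mem_iff_get.2 fun i => nonempty_of_eq_Icc (hIcc i)
    have hprec_get := List.pairwise_iff_get.1 hprec
    exact ⟨hIcc, hcover, fun i j hij => (hprec_get i j hij).1, fun i j hij c hi hj =>
      ⟨eq_add_one_of_pairwise_precedes hne hprec hij hi hj, (hprec_get i j hij).2 c hi hj⟩, hglued⟩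

namespace IsValidTuple

theorem mem_Icc_iff (h : IsValidTuple cmin cmax M S) :
    c ∈ Finset.Icc cmin cmax ↔ ∃ T ∈ S, c ∈ T :=
  (isValidTuple_iff_pairwise_isChain.1 h).2.1 c

theorem le_cmax (h : IsValidTuple cmin cmax M S) (hT : T ∈ S) (hc : c ∈ T) : c ≤ cmax :=
  (Finset.mem_Icc.1 (h.mem_Icc_iff.2 ⟨T, hT, hc⟩)).2

theorem exists_gt_of_lt (h : IsValidTuple cmin cmax M S) {i j : Fin S.length} (hij : i < j)
    (hc : c ∈ S.get i) : ∃ x ∈ S.get j, c < x :=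
  (List.pairwise_iff_get.1 (isValidTuple_iff_pairwise_isChain.1 h).2.2.1 i j hij).exists_gt hc
    (nonempty_of_eq_Icc (h.1 j))

theorem add_one_eq_length_of_cmax_mem (h : IsValidTuple cmin cmax M S) {i : Fin S.length}
    (hi : cmax ∈ S.get i) : (i : ℕ) + 1 = S.length := by
  by_contra hne
  let j : Fin S.length := ⟨i + 1, by omega⟩
  obtain ⟨x, hx, hlt⟩ := h.exists_gt_of_lt (j := j) (Nat.lt_succ_self i) hi
  exact hlt.not_ge (h.le_cmax (List.get_mem S j) hx)

theorem cmax_mem_of_mem_getLast? (h : IsValidTuple cmin cmax M S) (hle : cmin ≤ cmax)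
    (hA : A ∈ S.getLast?) : cmax ∈ A := by
  obtain ⟨T, hT, hmem⟩ := h.mem_Icc_iff.1 (Finset.right_mem_Icc.2 hle)
  obtain ⟨i, rfl⟩ := List.mem_iff_get.1 hT
  have hlast : S.length - 1 = i := by have := h.add_one_eq_length_of_cmax_mem hmem; omega
  have hAi : S.get i = A := by
    simpa [List.getLast?_eq_getElem?, hlast] using hA
  exact hAi ▸ hmem

theorem mem_get_iff_of_lt (h : IsValidTuple cmin cmax M S) {i j : Fin S.length} (hij : i < j)
    (hi : c ∈ S.get i) (hj : c ∈ S.get j) (k : Fin S.length) :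
    c ∈ S.get k ↔ k = j ∨ k = i := by
  have hsucc : ∀ {p q : Fin S.length}, p < q → c ∈ S.get p → c ∈ S.get q → (q : ℕ) = p + 1 :=
    fun hpq hp hq => (h.2.2.2.1 _ _ hpq c hp hq).1
  constructor
  · intro hk
    have hj_succ := hsucc hij hi hj
    rcases lt_trichotomy k j with hkj | rfl | hjk
    · have := hsucc hkj hk hj
      omega
    · exact Or.inl rfl
    · have := hsucc (hij.trans hjk) hi hk
      omega
  · rintro (rfl | rfl) <;> assumption

theorem get_eq_pair_of_lt (h : IsValidTuple cmin (d + 1) M S) {i j : Fin S.length} (hij : i < j)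
    (hi : d ∈ S.get i) (hj : d ∈ S.get j) : S.get j = {d, d + 1} := by
  obtain ⟨x, hx, hdx⟩ := h.exists_gt_of_lt hij hi
  obtain rfl : x = d + 1 := (h.le_cmax (List.get_mem S j) hx).antisymm hdx
  ext y
  simp only [Finset.mem_insert, Finset.mem_singleton]
  constructor
  · intro hy
    have hdy := h.2.2.1 i j hij d hi y hy
    have hyd := h.le_cmax (List.get_mem S j) hy
    omega
  · rintro (rfl | rfl) <;> assumption

theorem add_one_eq_length_of_lt (h : IsValidTuple cmin (d + 1) M S) {i j : Fin S.length}
    (hij : i < j) (hi : d ∈ S.get i) (hj : d ∈ S.get j) : (j : ℕ) + 1 = S.length := by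
  refine h.add_one_eq_length_of_cmax_mem ?_
  rw [h.get_eq_pair_of_lt hij hi hj]
  exact Finset.mem_insert_of_mem (Finset.mem_singleton_self (d + 1))

theorem mem_get_iff_of_isShared (h : IsValidTuple cmin (d + 1) M S) (hd : IsShared d S)
    (k : Fin S.length) :
    d ∈ S.get k ↔ (k : ℕ) = S.length - 1 ∨ (k : ℕ) = S.length - 2 := by
  obtain ⟨i, j, hij, hi, hj⟩ := isShared_iff_exists_lt.1 hd
  have hj_succ := (h.2.2.2.1 i j hij d hi hj).1
  have hj_last := h.add_one_eq_length_of_lt hij hi hj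
  rw [h.mem_get_iff_of_lt hij hi hj, Fin.ext_iff, Fin.ext_iff]
  omega

theorem exists_eq_append_pair (h : IsValidTuple cmin (d + 1) M S) (hd : IsShared d S) :
    ∃ S' : List (Finset ℕ), S = S' ++ [{d, d + 1}] ∧ ∃ A ∈ S', d ∈ A := by
  obtain ⟨i, j, hij, hi, hj⟩ := isShared_iff_exists_lt.1 hd
  have hj_last := h.add_one_eq_length_of_lt hij hi hj
  have hlast : ({d, d + 1} : Finset ℕ) ∈ S.getLast? := by
    rw [List.getLast?_eq_getElem?, ← hj_last, ← h.get_eq_pair_of_lt hij hi hj]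
    simp
  refine ⟨S.dropLast, (List.dropLast_append_getLast? _ hlast).symm, S.get i, ?_, hi⟩
  exact List.mem_iff_getElem.2
    ⟨i, by rw [List.length_dropLast]; omega, List.getElem_dropLast _⟩

theorem of_append_singleton (h : IsValidTuple cmin cmax M (S ++ [T])) (hA : A ∈ S) (hdA : d ∈ A)
    (hdT : d ∈ T) : IsValidTuple cmin d M S := by
  obtain ⟨hIcc, hcover, hprec, hglued⟩ := isValidTuple_iff_pairwise_isChain.1 h
  obtain ⟨hprecS, -, hST⟩ := List.pairwise_append.1 hprec
  have hprecT : ∀ B ∈ S, Precedes M B T := fun B hB => hST B hB T (List.mem_singleton_self T)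
  refine isValidTuple_iff_pairwise_isChain.2 ⟨fun B hB => hIcc B (List.mem_append_left _ hB),
    fun c => ?_, hprecS, (List.isChain_append.1 hglued).1⟩
  constructor
  · intro hc
    obtain ⟨hcmin, hcd⟩ := Finset.mem_Icc.1 hc
    have hd_le : d ≤ cmax := h.le_cmax (List.mem_append_left _ hA) hdA
    obtain ⟨B, hB, hcB⟩ := (hcover c).1 (Finset.mem_Icc.2 ⟨hcmin, hcd.trans hd_le⟩)
    rcases List.mem_append.1 hB with hBS | hBT
    · exact ⟨B, hBS, hcB⟩
    · obtain rfl := List.mem_singleton.1 hBT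
      obtain rfl : c = d := hcd.antisymm ((hprecT A hA).1 d hdA c hcB)
      exact ⟨A, hA, hdA⟩
  · rintro ⟨B, hB, hcB⟩
    have hc := (hcover c).2 ⟨B, List.mem_append_left _ hB, hcB⟩
    exact Finset.mem_Icc.2 ⟨(Finset.mem_Icc.1 hc).1, (hprecT B hB).1 c hcB d hdT⟩

theorem append_Icc (h : IsValidTuple cmin d M S) (hle : cmin ≤ d) (hlt : d < b) (hM : 1 < M d) :
    IsValidTuple cmin b M (S ++ [Finset.Icc d b]) := by
  obtain ⟨hIcc, -, hprec, hglued⟩ := isValidTuple_iff_pairwise_isChain.1 h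
  have hcard : 2 ≤ (Finset.Icc d b).card := by
    rw [Nat.card_Icc]
    omega
  refine isValidTuple_iff_pairwise_isChain.2 ⟨?_, fun c => ?_, ?_, ?_⟩
  · exact List.forall_mem_append.2 ⟨hIcc, List.forall_mem_singleton.2 ⟨d, b, hlt.le, rfl⟩⟩
  · simp only [List.mem_append, List.mem_singleton, or_and_right, exists_or, exists_eq_left,
      ← h.mem_Icc_iff, Finset.mem_Icc]
    omega
  · refine List.pairwise_append.2 ⟨hprec, List.pairwise_singleton _ _, fun A hA => ?_⟩
    refine List.forall_mem_singleton.2 ⟨fun s hs t ht => ?_, fun c hcA hc => ?_⟩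
    · exact (h.le_cmax hA hs).trans (Finset.mem_Icc.1 ht).1
    · obtain rfl : c = d := (h.le_cmax hA hcA).antisymm (Finset.mem_Icc.1 hc).1
      exact ⟨hcard, hM⟩
  · refine List.isChain_append.2 ⟨hglued, List.isChain_singleton _, ?_⟩
    rintro A hA _ ⟨rfl⟩ - c hc hmin -
    obtain rfl : c = d := (hmin d (Finset.left_mem_Icc.2 hlt.le)).antisymm (Finset.mem_Icc.1 hc).1
    exact h.cmax_mem_of_mem_getLast? hle hA

theorem append_pair (h : IsValidTuple cmin d M S) (hle : cmin ≤ d) (hM : 1 < M d) :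
    IsValidTuple cmin (d + 1) M (S ++ [{d, d + 1}]) ∧ IsShared d (S ++ [{d, d + 1}]) := by
  have hpair : ({d, d + 1} : Finset ℕ) = Finset.Icc d (d + 1) := by
    ext x
    simp only [Finset.mem_insert, Finset.mem_singleton, Finset.mem_Icc]
    omega
  obtain ⟨A, hA, hdA⟩ := h.mem_Icc_iff.1 (Finset.right_mem_Icc.2 hle)
  exact ⟨hpair ▸ h.append_Icc hle d.lt_succ_self hM,
    isShared_append_singleton hA hdA (Finset.mem_insert_self d _)⟩

end IsValidTuple

end

/-- Suppose `m_{cmax-1} > 1`. If `S` is a valid tuple for `M` in which `cmax - 1`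
belongs to more than one of the sets, then `cmax - 1` belongs to exactly the two
last sets `S_{k-1}` and `S_k`, and `S_k = {cmax - 1, cmax}`. Moreover dropping the
last set is a bijection from the set of such valid tuples for `M` onto the set of
all valid tuples for `M'`, with inverse appending the set `{cmax - 1, cmax}`. -/
theorem bijOn_overlap_case (cmin cmax : ℕ) (M : ℕ → ℕ)
    (hlt : cmin < cmax) (hM : IsBlockTuple cmin cmax M)
    (h1 : 1 < M (cmax - 1)) :
    (∀ S : List (Finset ℕ), IsValidTuple cmin cmax M S →
      (∃ i j : Fin S.length, i ≠ j ∧ cmax - 1 ∈ S.get i ∧ cmax - 1 ∈ S.get j) →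
      2 ≤ S.length ∧
      S.getLastD ∅ = ({cmax - 1, cmax} : Finset ℕ) ∧
      (∀ i : Fin S.length, cmax - 1 ∈ S.get i ↔
        ((i : ℕ) = S.length - 1 ∨ (i : ℕ) = S.length - 2))) ∧
    Set.BijOn (fun S : List (Finset ℕ) => S.dropLast)
      {S : List (Finset ℕ) | IsValidTuple cmin cmax M S ∧
        ∃ i j : Fin S.length, i ≠ j ∧ cmax - 1 ∈ S.get i ∧ cmax - 1 ∈ S.get j}
      {S' : List (Finset ℕ) | IsValidTuple cmin (cmax - 1) M S'} ∧
    Set.InvOn (fun S' : List (Finset ℕ) => S' ++ [({cmax - 1, cmax} : Finset ℕ)])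
      (fun S : List (Finset ℕ) => S.dropLast)
      {S : List (Finset ℕ) | IsValidTuple cmin cmax M S ∧
        ∃ i j : Fin S.length, i ≠ j ∧ cmax - 1 ∈ S.get i ∧ cmax - 1 ∈ S.get j}
      {S' : List (Finset ℕ) | IsValidTuple cmin (cmax - 1) M S'} := by
  obtain ⟨d, rfl⟩ : ∃ d, cmax = d + 1 := ⟨cmax - 1, by omega⟩
  simp only [Nat.add_sub_cancel] at *
  have hinv : Set.InvOn (· ++ [({d, d + 1} : Finset ℕ)]) List.dropLast
      {S | IsValidTuple cmin (d + 1) M S ∧ IsShared d S} {S' | IsValidTuple cmin d M S'} := by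
    refine ⟨fun S hS => ?_, fun S' _ => List.dropLast_concat⟩
    obtain ⟨S', rfl, -⟩ := hS.1.exists_eq_append_pair hS.2
    simp
  refine ⟨fun S hS hd => ?_, hinv.bijOn (fun S hS => ?_) fun S' hS' => ?_, hinv⟩
  · obtain ⟨S', hS', A, hA, -⟩ := hS.exists_eq_append_pair hd
    refine ⟨?_, by simp [hS'], hS.mem_get_iff_of_isShared hd⟩
    simpa [hS', Nat.one_le_iff_ne_zero] using List.ne_nil_of_mem hA
  · obtain ⟨S', rfl, A, hA, hdA⟩ := hS.1.exists_eq_append_pair hS.2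
    simpa using hS.1.of_append_singleton hA hdA (Finset.mem_insert_self d _)
  · exact IsValidTuple.append_pair hS' (Nat.lt_succ_iff.1 hlt) h1
end

section
/- Fix integers 0 ≤ c_min and c_max ≥ c_min + 2, and a block-tuple M = (m_{c_min}, …, m_{c_max}). If S' = (S'_1, …, S'_k) is a valid tuple for M' that fails property (Q), then S'_k = {c_max − 1}, and the map S' ↦ (S'_1, …, S'_{k−1}) is a bijection from the set of valid tuples for M' failing property (Q) onto the set of all valid tuples for M''; its inverse appends the singleton {c_max − 1}. -/
/-- Property (Q) for a tuple `S'` (a candidate valid tuple for `M'`): if the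
minimum of the last set `S'_k` is `cmax - 1`, then `k ≥ 2` and
`cmax - 1 ∈ S'_{k-1}`. -/
def PropQ (cmax : ℕ) (S' : List (Finset ℕ)) : Prop :=
  (cmax - 1 ∈ S'.getLastD ∅ ∧ ∀ x ∈ S'.getLastD ∅, cmax - 1 ≤ x) →
    (2 ≤ S'.length ∧ cmax - 1 ∈ S'.getD (S'.length - 2) ∅)

/-!
In a valid tuple for `M'` failing (Q), the last set has minimum `cmax - 1` and no element exceeds
`cmax - 1`, so it is `{cmax - 1}`. Appending a singleton `{x}` to a tuple imposes just one
condition: since `{x}` has fewer than two elements, (4) forbids `x` in the earlier sets, so by (3)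
these lie strictly below `x`, and then (4) and (5) say nothing more about `{x}`. The earlier sets
therefore form an arbitrary valid tuple for `M''`.
-/

/-- Conditions (1), (3), (4) and (5) of validity, which do not mention the range `{cmin, …, cmax}`.
They are expressed by `List.Pairwise` and `List.IsChain`, which behave well under appending a set;
(4) compares positions and hence runs over `S.zipIdx`, whose entries are the pairs `(S_i, i)`. -/
structure IsInterlocking (M : ℕ → ℕ) (S : List (Finset ℕ)) : Prop where
  exists_eq_Icc : ∀ A ∈ S, ∃ a b : ℕ, a ≤ b ∧ A = Finset.Icc a b
  pairwise_le : S.Pairwise fun A B => ∀ s ∈ A, ∀ t ∈ B, s ≤ t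
  pairwise_overlap : S.zipIdx.Pairwise fun p q => ∀ c ∈ p.1, c ∈ q.1 →
    q.2 = p.2 + 1 ∧ 2 ≤ q.1.card ∧ 1 < M c
  isChain_min_mem : S.IsChain fun A B => 2 ≤ B.card →
    ∀ c ∈ B, (∀ x ∈ B, c ≤ x) → 1 < M c → c ∈ A

theorem pairwise_zipIdx_iff_get {α : Type*} {R : α × ℕ → α × ℕ → Prop} {l : List α} :
    l.zipIdx.Pairwise R ↔ ∀ i j : Fin l.length, i < j → R (l.get i, i) (l.get j, j) := by
  simp only [List.pairwise_iff_getElem, Fin.forall_iff, List.length_zipIdx, List.getElem_zipIdx,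
    zero_add, List.get_eq_getElem, Fin.mk_lt_mk]
  exact ⟨fun h i hi j hj => h i j hi hj, fun h i j hi hj => h i hi j hj⟩

section

variable {cmin n x : ℕ} {M : ℕ → ℕ} {S L : List (Finset ℕ)} {X : Finset ℕ}

theorem isChain_min_mem_iff_get :
    (S.IsChain fun A B => 2 ≤ B.card → ∀ c ∈ B, (∀ x ∈ B, c ≤ x) → 1 < M c → c ∈ A) ↔
      ∀ i : Fin S.length, 1 ≤ (i : ℕ) → 2 ≤ (S.get i).card →
        ∀ c : ℕ, c ∈ S.get i → (∀ x ∈ S.get i, c ≤ x) → 1 < M c →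
        ∃ j : Fin S.length, (j : ℕ) + 1 = (i : ℕ) ∧ c ∈ S.get j := by
  rw [List.isChain_iff_getElem]
  constructor
  · rintro h ⟨_ | i, hi⟩ hpos hcard c hc hmin hM
    · simp at hpos
    · exact ⟨⟨i, by omega⟩, rfl, h i hi hcard c hc hmin hM⟩
  · intro h i hi hcard c hc hmin hM
    obtain ⟨j, hj, hcj⟩ := h ⟨i + 1, hi⟩ (by simp) hcard c hc hmin hM
    obtain rfl : (j : ℕ) = i := Nat.succ_injective hj
    exact hcj

theorem isValidTuple_iff_isInterlocking_and_cover :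
    IsValidTuple cmin n M S ↔
      IsInterlocking M S ∧ ∀ c, c ∈ Finset.Icc cmin n ↔ ∃ A ∈ S, c ∈ A := by
  constructor
  · rintro ⟨hIcc, hcover, hle, hover, hmin⟩
    exact ⟨⟨List.forall_mem_iff_get.2 hIcc, List.pairwise_iff_get.2 hle,
      pairwise_zipIdx_iff_get.2 hover, isChain_min_mem_iff_get.2 hmin⟩,
      fun c => by rw [hcover, List.exists_mem_iff_get]⟩
  · rintro ⟨⟨hIcc, hle, hover, hmin⟩, hcover⟩
    exact ⟨List.forall_mem_iff_get.1 hIcc,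
      fun c => (hcover c).trans List.exists_mem_iff_get, List.pairwise_iff_get.1 hle,
      pairwise_zipIdx_iff_get.1 hover, isChain_min_mem_iff_get.1 hmin⟩

theorem IsValidTuple.le_of_mem (hS : IsValidTuple cmin n M S) {A : Finset ℕ} (hA : A ∈ S) {c : ℕ}
    (hc : c ∈ A) : c ≤ n :=
  (Finset.mem_Icc.1 <| ((isValidTuple_iff_isInterlocking_and_cover.1 hS).2 c).2 ⟨A, hA, hc⟩).2

theorem IsInterlocking.of_append {T : List (Finset ℕ)} (h : IsInterlocking M (L ++ T)) :
    IsInterlocking M L where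
  exists_eq_Icc A hA := h.exists_eq_Icc A (List.mem_append_left T hA)
  pairwise_le := (List.pairwise_append.1 h.pairwise_le).1
  pairwise_overlap := (List.pairwise_append.1 (List.zipIdx_append ▸ h.pairwise_overlap)).1
  isChain_min_mem := h.isChain_min_mem.left_of_append

theorem IsInterlocking.lt_of_concat_singleton (h : IsInterlocking M (L ++ [{x}]))
    {A : Finset ℕ} (hA : A ∈ L) {s : ℕ} (hs : s ∈ A) : s < x := by
  have hle : s ≤ x := (List.pairwise_append.1 h.pairwise_le).2.2 A hA {x} (by simp) s hs x (by simp)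
  refine hle.lt_of_ne ?_
  rintro rfl
  obtain ⟨i, hi⟩ := List.mem_iff_getElem?.1 hA
  have hover := List.zipIdx_append ▸ h.pairwise_overlap
  have hcard : 2 ≤ ({s} : Finset ℕ).card :=
    ((List.pairwise_append.1 hover).2.2 (A, i) (List.mk_mem_zipIdx_iff_getElem?.2 hi)
      ({s}, L.length) (by simp) s hs (by simp)).2.1
  simp at hcard

theorem IsInterlocking.concat_singleton (h : IsInterlocking M L)
    (hlt : ∀ A ∈ L, ∀ s ∈ A, s < x) : IsInterlocking M (L ++ [{x}]) where
  exists_eq_Icc := by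
    simpa [or_imp, forall_and] using ⟨h.exists_eq_Icc, x, x, le_rfl, (Finset.Icc_self x).symm⟩
  pairwise_le := by
    simpa [List.pairwise_append] using ⟨h.pairwise_le, fun A hA s hs => (hlt A hA s hs).le⟩
  pairwise_overlap := by
    have hx : ∀ A ∈ L, x ∉ A := fun A hA hxA => (hlt A hA x hxA).false
    rw [List.zipIdx_append]
    refine List.pairwise_append.2 ⟨h.pairwise_overlap, by simp, ?_⟩
    intro p hp q hq c hcp hcq
    obtain rfl : c = x := by simp_all
    exact absurd hcp (hx p.1 (List.fst_mem_of_mem_zipIdx hp))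
  isChain_min_mem := by
    simp [List.isChain_append, h.isChain_min_mem]

theorem cover_concat_singleton_iff (hn : cmin ≤ n + 1) (hlt : ∀ A ∈ L, ∀ s ∈ A, s < n + 1) :
    (∀ c, c ∈ Finset.Icc cmin (n + 1) ↔ ∃ A ∈ L ++ [{n + 1}], c ∈ A) ↔
      ∀ c, c ∈ Finset.Icc cmin n ↔ ∃ A ∈ L, c ∈ A := by
  have hIcc (c : ℕ) : c ∈ Finset.Icc cmin (n + 1) ↔ c ∈ Finset.Icc cmin n ∨ c = n + 1 := by
    simp only [Finset.mem_Icc]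
    omega
  have hnotMemIcc : n + 1 ∉ Finset.Icc cmin n := by simp
  have hnotMem : ¬ ∃ A ∈ L, n + 1 ∈ A := fun ⟨A, hA, hmem⟩ => (hlt A hA _ hmem).false
  refine forall_congr' fun c => ?_
  simp only [hIcc, List.mem_append, List.mem_singleton, or_and_right, exists_or,
    exists_eq_left, Finset.mem_singleton]
  rcases eq_or_ne c (n + 1) with rfl | hc
  · simp only [hnotMemIcc, hnotMem, false_or]
  · simp only [hc, or_false]

theorem isValidTuple_concat_singleton_iff (hn : cmin ≤ n + 1) :
    IsValidTuple cmin (n + 1) M (L ++ [{n + 1}]) ↔ IsValidTuple cmin n M L := by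
  constructor
  · intro h
    obtain ⟨hlock, hcover⟩ := isValidTuple_iff_isInterlocking_and_cover.1 h
    have hlt : ∀ A ∈ L, ∀ s ∈ A, s < n + 1 := fun A hA s hs => hlock.lt_of_concat_singleton hA hs
    exact isValidTuple_iff_isInterlocking_and_cover.2
      ⟨hlock.of_append, (cover_concat_singleton_iff hn hlt).1 hcover⟩
  · intro h
    obtain ⟨hlock, hcover⟩ := isValidTuple_iff_isInterlocking_and_cover.1 h
    have hlt : ∀ A ∈ L, ∀ s ∈ A, s < n + 1 := fun A hA s hs => Nat.lt_succ_of_le (h.le_of_mem hA hs)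
    exact isValidTuple_iff_isInterlocking_and_cover.2
      ⟨hlock.concat_singleton hlt, (cover_concat_singleton_iff hn hlt).2 hcover⟩

theorem propQ_nil (n : ℕ) : PropQ n [] := by
  simp [PropQ]

theorem not_propQ_concat_iff :
    ¬ PropQ (n + 1) (L ++ [X]) ↔ (n ∈ X ∧ ∀ y ∈ X, n ≤ y) ∧ n ∉ L.getLastD ∅ := by
  rcases List.eq_nil_or_concat' L with rfl | ⟨L, Y, rfl⟩ <;> simp [PropQ, and_assoc]

theorem IsValidTuple.exists_eq_concat_singleton_of_not_propQ (hS : IsValidTuple cmin n M S)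
    (hQ : ¬ PropQ (n + 1) S) : ∃ L, S = L ++ [{n}] := by
  rcases List.eq_nil_or_concat' S with rfl | ⟨L, X, rfl⟩
  · exact absurd (propQ_nil _) hQ
  · obtain ⟨⟨hnX, hle⟩, -⟩ := not_propQ_concat_iff.1 hQ
    have hX : X = {n} := Finset.eq_singleton_iff_unique_mem.2
      ⟨hnX, fun y hy => (hS.le_of_mem (by simp) hy).antisymm (hle y hy)⟩
    exact ⟨L, by rw [hX]⟩

theorem IsValidTuple.not_propQ_concat_singleton (hL : IsValidTuple cmin n M L) :
    ¬ PropQ (n + 2) (L ++ [{n + 1}]) := by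
  refine not_propQ_concat_iff.2 ⟨by simp, fun hmem => ?_⟩
  rcases List.eq_nil_or_concat' L with rfl | ⟨L, Y, rfl⟩
  · simp at hmem
  · have : n + 1 ≤ n := hL.le_of_mem (A := Y) (by simp) (by simpa using hmem)
    omega

theorem isValidTuple_and_not_propQ_iff (hn : cmin ≤ n + 1) :
    IsValidTuple cmin (n + 1) M S ∧ ¬ PropQ (n + 2) S ↔
      ∃ L, IsValidTuple cmin n M L ∧ L ++ [{n + 1}] = S := by
  constructor
  · rintro ⟨hS, hQ⟩
    obtain ⟨L, rfl⟩ := hS.exists_eq_concat_singleton_of_not_propQ hQ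
    exact ⟨L, (isValidTuple_concat_singleton_iff hn).1 hS, rfl⟩
  · rintro ⟨L, hL, rfl⟩
    exact ⟨(isValidTuple_concat_singleton_iff hn).2 hL, hL.not_propQ_concat_singleton⟩

end

/-- Suppose `cmax ≥ cmin + 2`. A valid tuple for `M'` failing property (Q) has
last set `{cmax - 1}`, and dropping the last set is a bijection from the set of
valid tuples for `M'` failing property (Q) onto the set of all valid tuples for
`M''`; its inverse appends the singleton `{cmax - 1}`. -/
theorem bijOn_failQ (cmin cmax : ℕ) (M : ℕ → ℕ)
    (h2 : cmin + 2 ≤ cmax) (hM : IsBlockTuple cmin cmax M) :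
    (∀ S' : List (Finset ℕ), IsValidTuple cmin (cmax - 1) M S' → ¬ PropQ cmax S' →
      S'.getLastD ∅ = ({cmax - 1} : Finset ℕ)) ∧
    Set.BijOn (fun S' : List (Finset ℕ) => S'.dropLast)
      {S' : List (Finset ℕ) | IsValidTuple cmin (cmax - 1) M S' ∧ ¬ PropQ cmax S'}
      {S'' : List (Finset ℕ) | IsValidTuple cmin (cmax - 2) M S''} ∧
    Set.InvOn (fun S'' : List (Finset ℕ) => S'' ++ [({cmax - 1} : Finset ℕ)])
      (fun S' : List (Finset ℕ) => S'.dropLast)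
      {S' : List (Finset ℕ) | IsValidTuple cmin (cmax - 1) M S' ∧ ¬ PropQ cmax S'}
      {S'' : List (Finset ℕ) | IsValidTuple cmin (cmax - 2) M S''} := by
  obtain ⟨n, rfl⟩ : ∃ n, cmax = n + 2 := Nat.exists_eq_add_of_le' (by omega)
  have failQ_eq_image : {S' | IsValidTuple cmin (n + 1) M S' ∧ ¬ PropQ (n + 2) S'} =
      (fun S'' => S'' ++ [{n + 1}]) '' {S'' | IsValidTuple cmin n M S''} :=
    Set.ext fun _ => isValidTuple_and_not_propQ_iff (by omega)
  rw [show n + 2 - 1 = n + 1 from rfl, show n + 2 - 2 = n from rfl, failQ_eq_image]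
  have dropLast_concat : Function.LeftInverse (fun S' : List (Finset ℕ) => S'.dropLast)
      (fun S'' => S'' ++ [{n + 1}]) := fun _ => List.dropLast_concat
  have invOn : Set.InvOn (fun S'' => S'' ++ [{n + 1}]) (fun S' : List (Finset ℕ) => S'.dropLast)
      ((fun S'' => S'' ++ [{n + 1}]) '' {S'' | IsValidTuple cmin n M S''})
      {S'' | IsValidTuple cmin n M S''} :=
    ⟨Set.forall_mem_image.2 fun L _ => congrArg (· ++ [{n + 1}]) (dropLast_concat L),
      fun L _ => dropLast_concat L⟩
  refine ⟨fun S' hS' hQ => ?_, invOn.bijOn ?_ (Set.mapsTo_image _ _), invOn⟩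
  · obtain ⟨L, rfl⟩ := hS'.exists_eq_concat_singleton_of_not_propQ hQ
    exact List.getLastD_concat
  · rintro _ ⟨L, hL, rfl⟩
    exact (dropLast_concat L).symm ▸ hL
end
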